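/- Let α ∈ (0,1], let j ≥ 1 be an integer, let (c_k)_{k≥1} be complex numbers with Σ_{k=1}^∞ |c_k|^α < ∞, and let (φ_k)_{k≥1} be real numbers. Then the set T of all η ∈ ℝ such that either η = φ_{k_1} + ⋯ + φ_{k_i} for some 1 ≤ i ≤ j and some indices k_1,…,k_i ≥ 1, or Σ_{k_1,…,k_j=1}^∞ | c_{k_1} ⋯ c_{k_j} h_j(η; φ_{k_1},…,φ_{k_j}) | = ∞, has Hausdorff dimension at most jα. -/

import Mathlib

open scoped BigOperators ENNReal
open MeasureTheory

/-- The functions `h_J` of `1+J` real variables (extra variables beyond the first `J`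
are ignored), defined recursively by `h_0(η) = 1` and
`h_J(η;φ_1,…,φ_J) = (η - φ_1 - ⋯ - φ_J)⁻¹ Σ_{j=0}^{J-1} h_j(η;φ_1,…,φ_j) h_{J-j-1}(η;φ_{j+1},…,φ_{J-1})`. -/
noncomputable def hFun : ℕ → ℝ → (ℕ → ℝ) → ℝ
  | 0, _, _ => 1
  | (J+1), η, φ =>
      (η - ∑ i ∈ Finset.range (J+1), φ i)⁻¹ *
        ∑ j ∈ (Finset.range (J+1)).attach,
          hFun j.1 η φ * hFun (J - j.1) η (fun i => φ (i + j.1))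
  termination_by J _ _ => J
  decreasing_by
  · exact Nat.lt_of_lt_of_le (Finset.mem_range.mp j.2) (Nat.le_refl _)
  · exact Nat.lt_succ_of_le (Nat.sub_le J j.1)

/-- Pad a tuple `m : Fin J → ℕ` of indices into a function `ℕ → ℝ` listing `φ_{m_1},…,φ_{m_J}`. -/
noncomputable def padFin (J : ℕ) (φ : ℕ → ℝ) (m : Fin J → ℕ) : ℕ → ℝ :=
  fun n => if h : n < J then φ (m ⟨n, h⟩) else 0

/-!
Unfolding the recursion bounds `|h_J(η; φ_1, …, φ_J)|` by the Catalan number of `J` times the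
largest `|η - (φ_{a+1} + ⋯ + φ_b)|⁻ᴶ` over all blocks `a ≤ b ≤ J`, and since `α ≤ 1` the series
converges as soon as the `α`-th powers of its terms are summable. Hence divergence at `η` forces
one of finitely many series `∑ |c_{k_1} ⋯ c_{k_j}|^α |η - ψ_k|^{-jα}` to be infinite, where
`ψ_k = φ_{k_{a+1}} + ⋯ + φ_{k_b}`. Each is the Riesz potential of order `t = jα` of a finite atomic
measure `μ`. If such a potential is infinite at `x`, then for every `s > t` the ball of radius `r`
around `x` has measure at least `r ^ s` for arbitrarily small `r`, and by the Vitali covering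
theorem the set of these `x` has finite `s`-dimensional Hausdorff measure.
-/

open Filter Metric Set Topology
open scoped NNReal

section RieszPotential

variable {X : Type*} [MetricSpace X] [MeasurableSpace X]

/-- The Riesz potential `∫ d(x, y)⁻ᵗ dμ(y)` of order `t` of a measure `μ`. It takes values in
`ℝ≥0∞`, so that an atom at `x` makes it infinite when `0 < t`. -/
noncomputable def rieszPotential (μ : Measure X) (t : ℝ) (x : X) : ℝ≥0∞ :=
  ∫⁻ y, edist x y ^ (-t) ∂μ

theorem two_inv_pow_rpow_neg (t : ℝ) (n : ℕ) :
    ((2⁻¹ : ℝ≥0∞) ^ n) ^ (-t) = (2 ^ n) ^ t := by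
  rw [← ENNReal.inv_pow, ENNReal.rpow_neg, ENNReal.inv_rpow, inv_inv]

theorem rpow_neg_le_one_add_tsum_two_pow_rpow {t : ℝ} (ht : 0 ≤ t) (e : ℝ≥0∞) :
    e ^ (-t) ≤ 1 + ∑' n : ℕ, if e ≤ 2⁻¹ ^ n then (2 ^ (n + 1)) ^ t else 0 := by
  by_cases h : ∃ n : ℕ, 2⁻¹ ^ n ≤ e
  · have hle : e ^ (-t) ≤ (2 ^ Nat.find h) ^ t := by
      rw [← two_inv_pow_rpow_neg, ENNReal.rpow_neg, ENNReal.rpow_neg]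
      exact ENNReal.inv_le_inv' (ENNReal.rpow_le_rpow (Nat.find_spec h) ht)
    rcases hn : Nat.find h with _ | n
    · refine le_add_right (hle.trans_eq ?_)
      rw [hn, pow_zero, ENNReal.one_rpow]
    · have hen : e ≤ 2⁻¹ ^ n := (not_le.1 (Nat.find_min h (hn ▸ n.lt_succ_self))).le
      refine le_add_left (le_trans ?_ (ENNReal.le_tsum n))
      rwa [if_pos hen, ← hn]
  · push Not at h
    have htop : ∑' n : ℕ, (if e ≤ 2⁻¹ ^ n then (2 ^ (n + 1)) ^ t else 0 : ℝ≥0∞) = ∞ := by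
      refine top_unique ((ENNReal.tsum_const_eq_top_of_ne_zero one_ne_zero).ge.trans
        (ENNReal.tsum_le_tsum (f := fun _ : ℕ => 1) fun n => ?_))
      rw [if_pos (h n).le]
      exact (ENNReal.one_rpow t).symm.le.trans
        (ENNReal.rpow_le_rpow (one_le_pow₀ one_le_two) ht)
    rw [htop, add_top]
    exact le_top

theorem rieszPotential_le_add_tsum_measure_closedBall [OpensMeasurableSpace X] (μ : Measure X)
    {t : ℝ} (ht : 0 ≤ t) (x : X) :
    rieszPotential μ t x ≤
      μ univ + ∑' n : ℕ, (2 ^ (n + 1)) ^ t * μ (closedBall x ((2⁻¹ : ℝ≥0) ^ n : ℝ≥0)) := by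
  calc rieszPotential μ t x
      ≤ ∫⁻ y, 1 + ∑' n : ℕ, (closedBall x ((2⁻¹ : ℝ≥0) ^ n : ℝ≥0)).indicator
          (fun _ => (2 ^ (n + 1)) ^ t) y ∂μ := by
        refine lintegral_mono fun y => (rpow_neg_le_one_add_tsum_two_pow_rpow ht _).trans_eq ?_
        classical
        simp only [indicator_apply, ← closedEBall_coe, mem_closedEBall', ENNReal.coe_pow,
          ENNReal.coe_inv_two]
    _ = _ := by
        rw [lintegral_add_left measurable_const, lintegral_one, lintegral_tsum fun n =>
          (measurable_const.indicator measurableSet_closedBall).aemeasurable]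
        simp only [lintegral_indicator_const measurableSet_closedBall]

theorem tsum_ne_top_of_eventually_le {f g : ℕ → ℝ≥0∞} (hf : ∀ n, f n ≠ ∞)
    (hg : ∑' n, g n ≠ ∞) (hfg : ∀ᶠ n in atTop, f n ≤ g n) : ∑' n, f n ≠ ∞ := by
  obtain ⟨N, hN⟩ := eventually_atTop.1 hfg
  rw [← (ENNReal.summable (f := fun n => f (n + N))).sum_add_tsum_nat_add']
  refine ENNReal.add_ne_top.2 ⟨ENNReal.sum_ne_top.2 fun n _ => hf n, ne_top_of_le_ne_top hg ?_⟩
  exact (ENNReal.tsum_le_tsum fun n => hN _ (Nat.le_add_left N n)).trans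
    (ENNReal.tsum_comp_le_tsum_of_injective (add_left_injective N) g)

theorem tsum_two_pow_rpow_mul_two_inv_pow_rpow_ne_top {t s : ℝ} (hts : t < s) :
    ∑' n : ℕ, ((2 : ℝ≥0∞) ^ (n + 1)) ^ t * (2⁻¹ ^ n) ^ s ≠ ∞ := by
  have hterm (n : ℕ) :
      ((2 : ℝ≥0∞) ^ (n + 1)) ^ t * (2⁻¹ ^ n) ^ s = 2 ^ t * (2 ^ (t - s)) ^ n := by
    rw [← neg_neg s, two_inv_pow_rpow_neg]
    simp only [← ENNReal.rpow_natCast, ← ENNReal.rpow_mul]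
    rw [← ENNReal.rpow_add _ _ two_ne_zero ENNReal.ofNat_ne_top,
      ← ENNReal.rpow_add _ _ two_ne_zero ENNReal.ofNat_ne_top]
    congr 1
    push_cast
    ring
  have hlt : (2 : ℝ≥0∞) ^ (t - s) < 1 :=
    ENNReal.rpow_lt_one_of_one_lt_of_neg ENNReal.one_lt_two (sub_neg.2 hts)
  simp only [hterm, ENNReal.tsum_mul_left, ENNReal.tsum_geometric]
  exact ENNReal.mul_ne_top (ENNReal.rpow_ne_top_of_ne_zero two_ne_zero ENNReal.ofNat_ne_top)
    (ENNReal.inv_ne_top.2 (tsub_pos_iff_lt.2 hlt).ne')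

theorem rieszPotential_ne_top_of_eventually_measure_closedBall_le [OpensMeasurableSpace X]
    (μ : Measure X) [IsFiniteMeasure μ] {t s : ℝ} (ht : 0 ≤ t) (hts : t < s) {x : X}
    (h : ∀ᶠ r : ℝ≥0 in 𝓝[>] 0, μ (closedBall x r) ≤ r ^ s) : rieszPotential μ t x ≠ ∞ := by
  have hpow : Tendsto (fun n : ℕ => (2⁻¹ : ℝ≥0) ^ n) atTop (𝓝[>] 0) :=
    tendsto_nhdsWithin_iff.2 ⟨NNReal.tendsto_pow_atTop_nhds_zero_of_lt_one
      (inv_lt_one_of_one_lt₀ one_lt_two), Eventually.of_forall fun n => by simp⟩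
  refine ne_top_of_le_ne_top (ENNReal.add_ne_top.2 ⟨measure_ne_top μ univ, ?_⟩)
    (rieszPotential_le_add_tsum_measure_closedBall μ ht x)
  refine tsum_ne_top_of_eventually_le (fun n => ENNReal.mul_ne_top ?_ (measure_ne_top μ _))
    (tsum_two_pow_rpow_mul_two_inv_pow_rpow_ne_top hts) ?_
  · exact ENNReal.rpow_ne_top_of_nonneg ht (ENNReal.pow_ne_top ENNReal.ofNat_ne_top)
  · filter_upwards [hpow.eventually h] with n hn
    gcongr
    simpa only [ENNReal.coe_pow, ENNReal.coe_inv_two] using hn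

theorem exists_countable_cover_of_rpow_le_measure_closedBall [OpensMeasurableSpace X]
    (μ : Measure X) [SFinite μ] (s : ℝ) {E : Set X} {ε : ℝ≥0}
    (h : ∀ x ∈ E, ∃ r : ℝ≥0, 0 < r ∧ r ≤ ε ∧ (r : ℝ≥0∞) ^ s ≤ μ (closedBall x r)) :
    ∃ (u : Set X) (r : X → ℝ≥0), u.Countable ∧ (∀ x ∈ u, r x ≤ ε) ∧
      E ⊆ ⋃ x : u, closedEBall (x : X) (5 * r x) ∧ ∑' x : u, (r x : ℝ≥0∞) ^ s ≤ μ univ := by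
  choose! r hr0 hrε hrμ using h
  obtain ⟨u, huE, hdisj, hcover⟩ := Vitali.exists_disjoint_subfamily_covering_enlargement_closedBall
    E id (fun x => r x) ε (fun x hx => NNReal.coe_le_coe.2 (hrε x hx)) 5 (by norm_num)
  have hmeas (x : u) : MeasurableSet (closedBall (x : X) (r x)) := measurableSet_closedBall
  have hdisj' : Pairwise (Function.onFun Disjoint fun x : u => closedBall (x : X) (r x)) :=
    (pairwise_subtype_iff_pairwise_set u _).2 hdisj
  have hpos (x : u) : 0 < μ (closedBall (x : X) (r x)) :=
    (ENNReal.rpow_pos (ENNReal.coe_pos.2 (hr0 x (huE x.2))) ENNReal.coe_ne_top).trans_le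
      (hrμ x (huE x.2))
  refine ⟨u, r, ?_, fun x hx => hrε x (huE hx), fun x hx => ?_, ?_⟩
  · have hcount := Measure.countable_meas_pos_of_disjoint_iUnion (μ := μ) hmeas hdisj'
    simp only [hpos, ofPred_true, countable_univ_iff] at hcount
    exact countable_coe_iff.1 hcount
  · obtain ⟨y, hyu, hxy⟩ := hcover x hx
    refine mem_iUnion.2 ⟨⟨y, hyu⟩, ?_⟩
    have hmem := hxy (mem_closedBall_self (r x).2)
    rwa [← NNReal.coe_ofNat, ← NNReal.coe_mul, ← closedEBall_coe, ENNReal.coe_mul] at hmem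
  · calc ∑' x : u, (r x : ℝ≥0∞) ^ s
        ≤ ∑' x : u, μ (closedBall (x : X) (r x)) :=
          ENNReal.tsum_le_tsum fun x => hrμ x (huE x.2)
      _ ≤ μ (⋃ x : u, closedBall (x : X) (r x)) :=
          tsum_meas_le_meas_iUnion_of_disjoint μ hmeas hdisj'
      _ ≤ μ univ := measure_mono (subset_univ _)

variable [BorelSpace X]

theorem hausdorffMeasure_le_of_frequently_rpow_le_measure_closedBall (μ : Measure X) [SFinite μ]
    {s : ℝ} (hs : 0 ≤ s) {E : Set X}
    (h : ∀ x ∈ E, ∃ᶠ r : ℝ≥0 in 𝓝[>] 0, (r : ℝ≥0∞) ^ s ≤ μ (closedBall x r)) :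
    Measure.hausdorffMeasure s E ≤ 10 ^ s * μ univ := by
  obtain ⟨ε, -, hε0, hε⟩ := exists_seq_strictAnti_tendsto (0 : ℝ≥0)
  have hsmall (n : ℕ) (x : X) (hx : x ∈ E) :
      ∃ r : ℝ≥0, 0 < r ∧ r ≤ ε n ∧ (r : ℝ≥0∞) ^ s ≤ μ (closedBall x r) := by
    obtain ⟨r, hrμ, hr0, hrε⟩ := ((h x hx).and_eventually (Ioc_mem_nhdsGT (hε0 n))).exists
    exact ⟨r, hr0, hrε, hrμ⟩
  choose u r hu hrε hcover hsum using fun n =>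
    exists_countable_cover_of_rpow_le_measure_closedBall μ s (hsmall n)
  have hdiam (n : ℕ) (x : u n) : ediam (closedEBall (x : X) (5 * r n x)) ≤ 10 * r n x :=
    ediam_closedEBall_le.trans_eq (by rw [← mul_assoc]; norm_num)
  have hlim : Tendsto (fun n => 10 * (ε n : ℝ≥0∞)) atTop (𝓝 0) := by
    simpa using ENNReal.Tendsto.const_mul (ENNReal.tendsto_coe.2 hε)
      (Or.inr (ENNReal.ofNat_ne_top (n := 10)))
  have (n : ℕ) : Countable (u n) := (hu n).to_subtype
  refine (Measure.hausdorffMeasure_le_liminf_tsum s E _ hlim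
    (fun n (x : u n) => closedEBall (x : X) (5 * r n x))
    (Eventually.of_forall fun n x => (hdiam n x).trans ?_)
    (Eventually.of_forall hcover)).trans ?_
  · gcongr
    exact hrε n x x.2
  · refine liminf_le_of_le (by isBoundedDefault) fun b hb => ?_
    obtain ⟨n, hn⟩ := hb.exists
    calc b ≤ ∑' x : u n, ediam (closedEBall (x : X) (5 * r n x)) ^ s := hn
      _ ≤ ∑' x : u n, 10 ^ s * (r n x : ℝ≥0∞) ^ s := ENNReal.tsum_le_tsum fun x => by
          rw [← ENNReal.mul_rpow_of_nonneg _ _ hs]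
          exact ENNReal.rpow_le_rpow (hdiam n x) hs
      _ ≤ 10 ^ s * μ univ := by
          rw [ENNReal.tsum_mul_left]
          gcongr
          exact hsum n

theorem dimH_setOf_rieszPotential_eq_top_le (μ : Measure X) [IsFiniteMeasure μ] (t : ℝ≥0) :
    dimH {x | rieszPotential μ t x = ∞} ≤ t := by
  by_contra! h
  obtain ⟨s, hts, hs⟩ := ENNReal.lt_iff_exists_nnreal_btwn.1 h
  refine hs.not_ge (dimH_le_of_hausdorffMeasure_ne_top (ne_top_of_le_ne_top
    (ENNReal.mul_ne_top (ENNReal.rpow_ne_top_of_nonneg s.2 ENNReal.ofNat_ne_top)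
      (measure_ne_top μ univ))
    (hausdorffMeasure_le_of_frequently_rpow_le_measure_closedBall μ s.2 fun x hx => ?_)))
  contrapose! hx
  exact rieszPotential_ne_top_of_eventually_measure_closedBall_le μ t.2
    (NNReal.coe_lt_coe.2 (ENNReal.coe_lt_coe.1 hts)) (hx.mono fun _ => le_of_lt)

end RieszPotential

theorem dimH_setOf_tsum_mul_edist_rpow_neg_eq_top_le {X ι : Type*} [MetricSpace X]
    {w : ι → ℝ≥0∞} (hw : ∑' m, w m ≠ ∞) (ψ : ι → X) (t : ℝ≥0) :
    dimH {x | ∑' m, w m * edist x (ψ m) ^ (-(t : ℝ)) = ∞} ≤ t := by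
  borelize X
  let μ : Measure X := Measure.sum fun m => w m • Measure.dirac (ψ m)
  have : IsFiniteMeasure μ := ⟨by simpa [μ] using hw.lt_top⟩
  convert dimH_setOf_rieszPotential_eq_top_le μ t using 4
  simp [μ, rieszPotential, lintegral_sum_measure, lintegral_smul_measure]

theorem tsum_enorm_rpow_ne_top_iff_summable_norm_rpow {ι E : Type*} [SeminormedAddCommGroup E]
    {f : ι → E} {α : ℝ} (hα : 0 ≤ α) :
    ∑' i, ‖f i‖ₑ ^ α ≠ ∞ ↔ Summable fun i => ‖f i‖ ^ α := by
  have hnorm (i : ι) : ‖f i‖ₑ ^ α = ‖‖f i‖ ^ α‖ₑ := by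
    rw [Real.enorm_rpow_of_nonneg (norm_nonneg _) hα, enorm_norm]
  simp only [hnorm, tsum_enorm_ne_top_iff_summable_norm,
    Real.norm_of_nonneg (Real.rpow_nonneg (norm_nonneg _) α)]

theorem summable_norm_of_summable_norm_rpow {ι E : Type*} [NormedAddCommGroup E] {f : ι → E}
    {α : ℝ} (hα0 : 0 < α) (hα1 : α ≤ 1) (hf : Summable fun i => ‖f i‖ ^ α) :
    Summable fun i => ‖f i‖ := by
  have hα : (ENNReal.ofReal α).toReal = α := ENNReal.toReal_ofReal hα0.le
  have hmem : Memℓp f (ENNReal.ofReal α) := memℓp_gen (by rwa [hα])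
  simpa using (memℓp_gen_iff (by simp)).1 (hmem.of_exponent_ge (ENNReal.ofReal_le_one.2 hα1))

theorem tsum_prod_fin {κ : Type*} (n : ℕ) (f : Fin n → κ → ℝ≥0∞) :
    ∑' m : Fin n → κ, ∏ i, f i (m i) = ∏ i, ∑' k, f i k := by
  induction n with
  | zero => simp
  | succ n ih =>
    rw [← (Fin.insertNthEquiv (fun _ => κ) 0).tsum_eq, ENNReal.tsum_prod', Fin.prod_univ_succ,
      ← ih, ← ENNReal.tsum_mul_right]
    simp [Fin.prod_univ_succ, ENNReal.tsum_mul_left]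

theorem summable_norm_prod_rpow {κ R : Type*} [NormedCommRing R] [NormOneClass R]
    {α : ℝ} (hα : 0 ≤ α) {c : κ → R} (hc : Summable fun k => ‖c k‖ ^ α) (n : ℕ) :
    Summable fun m : Fin n → κ => ‖∏ i, c (m i)‖ ^ α := by
  have hle (m : Fin n → κ) : ‖∏ i, c (m i)‖ₑ ^ α ≤ ∏ i, ‖c (m i)‖ₑ ^ α := by
    rw [ENNReal.prod_rpow_of_nonneg hα]
    gcongr
    simp only [enorm_eq_nnnorm]
    exact_mod_cast Finset.nnnorm_prod_le Finset.univ fun i => c (m i)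
  rw [← tsum_enorm_rpow_ne_top_iff_summable_norm_rpow hα] at hc ⊢
  refine ne_top_of_le_ne_top ?_ (ENNReal.tsum_le_tsum hle)
  rw [tsum_prod_fin n fun _ k => ‖c k‖ₑ ^ α]
  exact ENNReal.prod_ne_top fun _ _ => hc

theorem countable_setOf_eq_sum_fin {κ M : Type*} [Countable κ] [AddCommMonoid M] (φ : κ → M)
    (j : ℕ) : {η : M | ∃ i : ℕ, 1 ≤ i ∧ i ≤ j ∧ ∃ m : Fin i → κ, η = ∑ i', φ (m i')}.Countable := by
  refine (countable_iUnion fun i => countable_range fun m : Fin i → κ => ∑ i', φ (m i')).mono ?_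
  rintro _ ⟨i, -, -, m, rfl⟩
  exact mem_iUnion.2 ⟨i, m, rfl⟩

theorem enorm_inv_le {𝕜 : Type*} [NormedDivisionRing 𝕜] (x : 𝕜) : ‖x⁻¹‖ₑ ≤ ‖x‖ₑ⁻¹ := by
  rcases eq_or_ne x 0 with rfl | hx
  · simp
  · exact (enorm_inv hx).le

theorem hFun_succ (J : ℕ) (η : ℝ) (φ : ℕ → ℝ) :
    hFun (J + 1) η φ = (η - ∑ i ∈ Finset.range (J + 1), φ i)⁻¹ *
      ∑ j ∈ Finset.range (J + 1), hFun j η φ * hFun (J - j) η fun i => φ (i + j) := by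
  rw [hFun, Finset.sum_attach (Finset.range (J + 1))
    fun j => hFun j η φ * hFun (J - j) η fun i => φ (i + j)]

theorem enorm_hFun_le (J : ℕ) {η : ℝ} {φ : ℕ → ℝ} {M : ℝ≥0∞}
    (h : ∀ a b, a ≤ b → b ≤ J → (edist η (∑ i ∈ Finset.Ico a b, φ i))⁻¹ ≤ M) :
    ‖hFun J η φ‖ₑ ≤ catalan J * M ^ J := by
  induction J using Nat.strong_induction_on generalizing φ with
  | _ J ih =>
  cases J with
  | zero => simp [hFun]
  | succ J =>
    have hinv : ‖(η - ∑ i ∈ Finset.range (J + 1), φ i)⁻¹‖ₑ ≤ M := by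
      refine (enorm_inv_le _).trans ?_
      rw [← edist_eq_enorm_sub, ← Nat.Ico_zero_eq_range]
      exact h 0 (J + 1) (Nat.zero_le _) le_rfl
    have hterm (j : ℕ) (hj : j ≤ J) : ‖hFun j η φ * hFun (J - j) η fun i => φ (i + j)‖ₑ ≤
        (catalan j * catalan (J - j) : ℕ) * M ^ J := by
      have hshift (a b : ℕ) (hab : a ≤ b) (hb : b ≤ J - j) :
          (edist η (∑ i ∈ Finset.Ico a b, φ (i + j)))⁻¹ ≤ M := by
        rw [Finset.sum_Ico_add' φ a b j]
        exact h _ _ (by lia) (by lia)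
      calc ‖hFun j η φ * hFun (J - j) η fun i => φ (i + j)‖ₑ
          ≤ (catalan j * M ^ j) * (catalan (J - j) * M ^ (J - j)) := by
            rw [enorm_mul]
            exact mul_le_mul' (ih j (by lia) fun a b hab hb => h a b hab (by lia))
              (ih (J - j) (by lia) hshift)
        _ = (catalan j * catalan (J - j) : ℕ) * M ^ J := by
            rw [mul_mul_mul_comm, ← pow_add, Nat.add_sub_cancel' hj, Nat.cast_mul]
    calc ‖hFun (J + 1) η φ‖ₑ
        ≤ M * ∑ j ∈ Finset.range (J + 1), (catalan j * catalan (J - j) : ℕ) * M ^ J := by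
          rw [hFun_succ, enorm_mul]
          exact mul_le_mul' hinv ((enorm_sum_le _ _).trans (Finset.sum_le_sum fun j hj =>
            hterm j (Finset.mem_range_succ_iff.1 hj)))
      _ = catalan (J + 1) * M ^ (J + 1) := by
          rw [← Finset.sum_mul, ← Nat.cast_sum, catalan_succ,
            Fin.sum_univ_eq_sum_range fun i => catalan i * catalan (J - i)]
          ring

theorem enorm_hFun_rpow_le (J : ℕ) {α : ℝ} (hα : 0 ≤ α) (η : ℝ) (φ : ℕ → ℝ) :
    ‖hFun J η φ‖ₑ ^ α ≤ catalan J ^ α *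
      ∑ p ∈ Finset.range (J + 1) ×ˢ Finset.range (J + 1),
        edist η (∑ i ∈ Finset.Ico p.1 p.2, φ i) ^ (-(J * α)) := by
  obtain ⟨p, hp, hmax⟩ := (Finset.range (J + 1) ×ˢ Finset.range (J + 1)).exists_max_image
    (fun p => (edist η (∑ i ∈ Finset.Ico p.1 p.2, φ i))⁻¹) ⟨(0, 0), by simp⟩
  set e := edist η (∑ i ∈ Finset.Ico p.1 p.2, φ i)
  have hle : ‖hFun J η φ‖ₑ ≤ catalan J * e⁻¹ ^ J := enorm_hFun_le J fun a b hab hb =>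
    hmax (a, b) (by simp only [Finset.mem_product, Finset.mem_range]; lia)
  calc ‖hFun J η φ‖ₑ ^ α ≤ (catalan J * e⁻¹ ^ J) ^ α := by gcongr
    _ = catalan J ^ α * e ^ (-(J * α)) := by
      rw [ENNReal.mul_rpow_of_nonneg _ _ hα, ← ENNReal.rpow_natCast_mul, ENNReal.inv_rpow,
        ENNReal.rpow_neg]
    _ ≤ _ := by
      gcongr
      exact Finset.single_le_sum
        (f := fun p : ℕ × ℕ => edist η (∑ i ∈ Finset.Ico p.1 p.2, φ i) ^ (-(J * α)))
        (fun _ _ => zero_le) hp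

theorem summable_norm_mul_abs_hFun {ι E : Type*} [SeminormedAddCommGroup E] {α : ℝ} (hα0 : 0 < α)
    (hα1 : α ≤ 1) (J : ℕ) (w : ι → E) (θ : ι → ℕ → ℝ) {η : ℝ}
    (h : ∀ a b, ∑' m, ‖w m‖ₑ ^ α * edist η (∑ i ∈ Finset.Ico a b, θ m i) ^ (-(J * α)) ≠ ∞) :
    Summable fun m => ‖w m‖ * |hFun J η (θ m)| := by
  have hbound (m : ι) : ‖‖w m‖ * hFun J η (θ m)‖ₑ ^ α ≤ catalan J ^ α *
      ∑ p ∈ Finset.range (J + 1) ×ˢ Finset.range (J + 1),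
        ‖w m‖ₑ ^ α * edist η (∑ i ∈ Finset.Ico p.1 p.2, θ m i) ^ (-(J * α)) := by
    rw [enorm_mul, enorm_norm, ENNReal.mul_rpow_of_nonneg _ _ hα0.le, ← Finset.mul_sum,
      mul_left_comm]
    gcongr
    exact enorm_hFun_rpow_le J hα0.le η (θ m)
  have hfin : ∑' m, ‖‖w m‖ * hFun J η (θ m)‖ₑ ^ α ≠ ∞ := by
    refine ne_top_of_le_ne_top ?_ (ENNReal.tsum_le_tsum hbound)
    rw [ENNReal.tsum_mul_left, Summable.tsum_finsetSum fun _ _ => ENNReal.summable]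
    exact ENNReal.mul_ne_top (ENNReal.rpow_ne_top_of_nonneg hα0.le (ENNReal.natCast_ne_top _))
      (ENNReal.sum_ne_top.2 fun p _ => h p.1 p.2)
  have hsummable : Summable fun m => ‖‖w m‖ * hFun J η (θ m)‖ :=
    summable_norm_of_summable_norm_rpow hα0 hα1
      ((tsum_enorm_rpow_ne_top_iff_summable_norm_rpow hα0.le).1 hfin)
  simpa only [norm_mul, norm_norm, Real.norm_eq_abs, abs_norm] using hsummable

/- `S` stands for the resonant values of `η`, where the convention `0⁻¹ = 0` gives `hFun` junk
values. -/
theorem stmt15_general {ι E : Type*} [SeminormedAddCommGroup E] {α : ℝ} (hα0 : 0 < α)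
    (hα1 : α ≤ 1) (j : ℕ) {w : ι → E} (hw : Summable fun m => ‖w m‖ ^ α) (θ : ι → ℕ → ℝ)
    {S : Set ℝ} (hS : S.Countable) :
    dimH (S ∪ {η | ¬ Summable fun m => ‖w m‖ * |hFun j η (θ m)|})
      ≤ ENNReal.ofReal ((j : ℝ) * α) := by
  let D (p : ℕ × ℕ) : Set ℝ :=
    {η | ∑' m, ‖w m‖ₑ ^ α * edist η (∑ i ∈ Finset.Ico p.1 p.2, θ m i) ^ (-(j * α)) = ∞}
  have hD (p : ℕ × ℕ) : dimH (D p) ≤ ENNReal.ofReal (j * α) := by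
    have := dimH_setOf_tsum_mul_edist_rpow_neg_eq_top_le
      ((tsum_enorm_rpow_ne_top_iff_summable_norm_rpow hα0.le).2 hw)
      (fun m => ∑ i ∈ Finset.Ico p.1 p.2, θ m i) (j * α).toNNReal
    rwa [Real.coe_toNNReal _ (by positivity)] at this
  have hsub : {η | ¬ Summable fun m => ‖w m‖ * |hFun j η (θ m)|} ⊆ ⋃ p, D p := by
    intro η hη
    by_contra hηD
    simp only [D, mem_iUnion, mem_ofPred_eq, Prod.exists, not_exists] at hηD
    exact hη (summable_norm_mul_abs_hFun hα0 hα1 j w θ hηD)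
  rw [dimH_union, hS.dimH_zero]
  refine max_le zero_le ((dimH_mono hsub).trans ?_)
  rw [dimH_iUnion]
  exact iSup_le hD

theorem stmt15 (α : ℝ) (hα0 : 0 < α) (hα1 : α ≤ 1) (j : ℕ) (hj : 1 ≤ j)
    (c : ℕ → ℂ) (hc : Summable fun k => ‖c k‖ ^ α) (φ : ℕ → ℝ) :
    dimH {η : ℝ |
        (∃ i : ℕ, 1 ≤ i ∧ i ≤ j ∧ ∃ m : Fin i → ℕ, η = ∑ i', φ (m i')) ∨
        ¬ Summable fun m : Fin j → ℕ =>
            ‖∏ i, c (m i)‖ * |hFun j η (padFin j φ m)|}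
      ≤ ENNReal.ofReal ((j : ℝ) * α) :=
  stmt15_general hα0 hα1 j (summable_norm_prod_rpow hα0.le hc j) (padFin j φ)
    (countable_setOf_eq_sum_fin φ j)
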